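/- arXiv:2005.02945 — 4 statements merged into one kernel-verified Lean document; each statement's English description precedes it below -/
import Mathlib

section
/- Let q ≥ 2, n, d be positive integers with qd = (q−1)n. Then every code C ⊆ (Fin q)^n with |C| = qn − 1 and minimum Hamming distance at least d can be extended to a code of cardinality qn with minimum Hamming distance at least d; that is, there exists a word u ∈ (Fin q)^n with u ∉ C such that d_H(u,w) ≥ d for all w ∈ C. -/
/-!
Write `n = q * m`, so that two words at distance at least `d = n - m` agree in at most `m` places.
By a Plotkin-type variance estimate, a letter occurs in a given coordinate of at most `n` codewords,
and if it occurs in exactly `n` of them, then these `n` words are balanced: in every other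
coordinate each letter occurs `m` times. As `C` has `q * n - 1` words, in each coordinate `i`
exactly one letter `u i` occurs `n - 1` times and every other letter occurs `n` times.

Let `B` be the set of the `n - 1` codewords with letter `u i` in coordinate `i`. Balancedness of the
full blocks determines all the letter counts of `B`, hence the sum of the agreements of a fixed word
with the members of `B`. For a member `x` of `B` this forces `x` to agree with `u` in at least `m`
places, while for `u` itself the sum is `(n - 1) * m`, so each member of `B` agrees with `u` in
exactly `m` places. The codewords outside all these sets `B` agree with `u` nowhere.
-/

open Finset

section Agreement

variable {ι α : Type*} [Fintype ι] [DecidableEq α]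

/-- The number of coordinates in which two words agree; it complements the Hamming distance. -/
def agreement (v w : ι → α) : ℕ := #{i | v i = w i}

lemma agreement_self (v : ι → α) : agreement v v = Fintype.card ι := by
  simp [agreement]

lemma agreement_add_hammingDist (v w : ι → α) :
    agreement v w + hammingDist v w = Fintype.card ι :=
  card_filter_add_card_filter_not fun i ↦ v i = w i

lemma le_hammingDist_iff_agreement_le {m d : ℕ} (h : m + d = Fintype.card ι) (v w : ι → α) :
    d ≤ hammingDist v w ↔ agreement v w ≤ m := by
  have := agreement_add_hammingDist v w
  omega

lemma sum_agreement_add_le {B : Finset (ι → α)} {m : ℕ}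
    (hB : (B : Set (ι → α)).Pairwise fun v w ↦ agreement v w ≤ m) {x : ι → α} (hx : x ∈ B) :
    ∑ w ∈ B, agreement w x + m ≤ Fintype.card ι + #B * m := by
  classical
  have h_others : ∑ w ∈ B.erase x, agreement w x ≤ #(B.erase x) * m :=
    sum_le_card_nsmul _ _ _ fun w hw ↦ hB (mem_of_mem_erase hw) hx (ne_of_mem_erase hw)
  rw [← add_sum_erase B _ hx, agreement_self, ← card_erase_add_one hx]
  linarith

end Agreement

section LetterBlock

variable {ι α : Type*} [DecidableEq α]

/-- The words of `C` with letter `a` in coordinate `i`; these are the blocks of the net formed by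
a code. -/
def letterBlock (C : Finset (ι → α)) (i : ι) (a : α) : Finset (ι → α) := {w ∈ C | w i = a}

@[simp]
lemma mem_letterBlock {C : Finset (ι → α)} {i : ι} {a : α} {w : ι → α} :
    w ∈ letterBlock C i a ↔ w ∈ C ∧ w i = a :=
  mem_filter

lemma letterBlock_subset (C : Finset (ι → α)) (i : ι) (a : α) : letterBlock C i a ⊆ C :=
  filter_subset _ _

lemma letterBlock_comm (C : Finset (ι → α)) (i j : ι) (a b : α) :
    letterBlock (letterBlock C i a) j b = letterBlock (letterBlock C j b) i a :=
  filter_comm _ _ C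

lemma card_letterBlock_letterBlock_same (C : Finset (ι → α)) (i : ι) (a b : α) :
    #(letterBlock (letterBlock C i a) i b) = if b = a then #(letterBlock C i a) else 0 := by
  split_ifs with h
  · exact congrArg card (filter_true_of_mem fun w hw ↦ (mem_letterBlock.1 hw).2.trans h.symm)
  · exact card_eq_zero.2 <| filter_false_of_mem fun w hw hb ↦
      h (hb.symm.trans (mem_letterBlock.1 hw).2)

lemma sum_card_letterBlock [Fintype α] (C : Finset (ι → α)) (i : ι) :
    ∑ a, #(letterBlock C i a) = #C :=
  (card_eq_sum_card_fiberwise fun _ _ ↦ mem_coe.2 (mem_univ _)).symm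

lemma sum_agreement [Fintype ι] (B : Finset (ι → α)) (x : ι → α) :
    ∑ w ∈ B, agreement w x = ∑ j, #(letterBlock B j (x j)) :=
  sum_card_bipartiteAbove_eq_sum_card_bipartiteBelow fun (w : ι → α) j ↦ w j = x j

lemma sum_sum_agreement [Fintype ι] [Fintype α] (B : Finset (ι → α)) :
    ∑ x ∈ B, ∑ w ∈ B, agreement w x = ∑ j, ∑ a, #(letterBlock B j a) ^ 2 := by
  simp_rw [sum_agreement]
  rw [sum_comm]
  refine sum_congr rfl fun j _ ↦ ?_
  rw [← sum_fiberwise B fun x ↦ x j]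
  refine sum_congr rfl fun a _ ↦ ?_
  rw [sum_const_nat fun x hx ↦ congrArg (fun b ↦ #(letterBlock B j b)) (mem_filter.1 hx).2, sq]
  rfl

end LetterBlock

section LetterDeviation

variable {ι α : Type*} [Fintype α] [DecidableEq α]

/-- The sum over all letters `a` of the squared deviation of the number of occurrences of `a` in
coordinate `j` from its mean `#B / q`, scaled by `q ^ 2` to be an integer. -/
def letterDeviation (B : Finset (ι → α)) (j : ι) : ℤ :=
  ∑ a, (Fintype.card α * #(letterBlock B j a) - #B : ℤ) ^ 2

lemma letterDeviation_nonneg (B : Finset (ι → α)) (j : ι) : 0 ≤ letterDeviation B j :=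
  sum_nonneg fun _ _ ↦ sq_nonneg _

lemma letterDeviation_eq_zero_iff {B : Finset (ι → α)} {j : ι} :
    letterDeviation B j = 0 ↔ ∀ a, Fintype.card α * #(letterBlock B j a) = #B := by
  rw [letterDeviation, sum_eq_zero_iff_of_nonneg fun _ _ ↦ sq_nonneg _]
  simp only [mem_univ, true_imp_iff, sq_eq_zero_iff, sub_eq_zero]
  norm_cast

lemma letterDeviation_eq (B : Finset (ι → α)) (j : ι) :
    letterDeviation B j =
      (Fintype.card α : ℤ) ^ 2 * ∑ a, (#(letterBlock B j a) : ℤ) ^ 2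
        - Fintype.card α * (#B : ℤ) ^ 2 := by
  have h_total : ∑ a, (#(letterBlock B j a) : ℤ) = #B := mod_cast sum_card_letterBlock B j
  simp only [letterDeviation, sub_sq, mul_pow, sum_add_distrib, sum_sub_distrib, ← mul_sum,
    ← sum_mul, h_total, sum_const, card_univ, nsmul_eq_mul]
  ring

lemma letterDeviation_letterBlock_same (C : Finset (ι → α)) (i : ι) (a : α) :
    letterDeviation (letterBlock C i a) i =
      Fintype.card α * (Fintype.card α - 1) * (#(letterBlock C i a) : ℤ) ^ 2 := by
  simp only [letterDeviation_eq, card_letterBlock_letterBlock_same, Nat.cast_ite, Nat.cast_zero,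
    ite_pow, ne_eq, OfNat.ofNat_ne_zero, not_false_eq_true, zero_pow, sum_ite_eq', mem_univ,
    if_true]
  ring

lemma sum_letterDeviation_le [Fintype ι] {m : ℕ} (hm : Fintype.card ι = Fintype.card α * m)
    {B : Finset (ι → α)} (hB : (B : Set (ι → α)).Pairwise fun v w ↦ agreement v w ≤ m) :
    ∑ j, letterDeviation B j ≤
      Fintype.card α * (Fintype.card α - 1) * (Fintype.card ι * #B : ℤ) := by
  have h_pairs : ∑ x ∈ B, (∑ w ∈ B, agreement w x + m) ≤ #B * (Fintype.card ι + #B * m) :=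
    sum_le_card_nsmul _ _ _ fun x hx ↦ sum_agreement_add_le hB hx
  rw [sum_add_distrib, sum_sum_agreement, sum_const, smul_eq_mul] at h_pairs
  zify at h_pairs hm
  simp only [letterDeviation_eq, sum_sub_distrib, ← mul_sum, sum_const, card_univ, nsmul_eq_mul]
  rw [hm] at h_pairs ⊢
  linear_combination (Fintype.card α : ℤ) ^ 2 * h_pairs

end LetterDeviation

section Plotkin

variable {ι α : Type*} [Fintype ι] [Fintype α] [DecidableEq α] {m : ℕ} {C : Finset (ι → α)}

lemma card_letterBlock_le [Nontrivial α] (hm : Fintype.card ι = Fintype.card α * m)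
    (hC : (C : Set (ι → α)).Pairwise fun v w ↦ agreement v w ≤ m) (i : ι) (a : α) :
    #(letterBlock C i a) ≤ Fintype.card ι := by
  have h_sum := sum_letterDeviation_le hm (hC.mono (coe_subset.2 (letterBlock_subset C i a)))
  have h_single := single_le_sum (fun j _ ↦ letterDeviation_nonneg (letterBlock C i a) j)
    (mem_univ i)
  rw [letterDeviation_letterBlock_same] at h_single
  have h_q : (1 : ℤ) < Fintype.card α := mod_cast Fintype.one_lt_card
  have h_sq := le_of_mul_le_mul_left (h_single.trans h_sum)
    (mul_pos (by linarith) (sub_pos.2 h_q))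
  norm_cast at h_sq
  by_contra! h
  nlinarith

lemma card_letterBlock_letterBlock_of_card_eq (hm : Fintype.card ι = Fintype.card α * m)
    (hC : (C : Set (ι → α)).Pairwise fun v w ↦ agreement v w ≤ m) {i j : ι} (hij : i ≠ j) {a : α}
    (ha : #(letterBlock C i a) = Fintype.card ι) (b : α) :
    #(letterBlock (letterBlock C i a) j b) = m := by
  classical
  set B := letterBlock C i a with hB
  have h_sum := sum_letterDeviation_le hm (hC.mono (coe_subset.2 (letterBlock_subset C i a)))
  have h_pair : letterDeviation B i + letterDeviation B j ≤ ∑ k, letterDeviation B k := by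
    rw [← sum_pair hij]
    exact sum_le_univ_sum_of_nonneg (letterDeviation_nonneg B)
  rw [hB, letterDeviation_letterBlock_same, ← hB, ha] at h_pair
  rw [← hB, ha] at h_sum
  have h_zero : letterDeviation B j = 0 :=
    le_antisymm (by linarith) (letterDeviation_nonneg B j)
  have h_count := letterDeviation_eq_zero_iff.1 h_zero b
  rw [ha, hm] at h_count
  exact Nat.eq_of_mul_eq_mul_left (Fintype.card_pos_iff.2 ⟨a⟩) h_count

end Plotkin

lemma exists_add_ite_eq_of_sum_add_one_eq {α : Type*} [Fintype α] [DecidableEq α]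
    {c : α → ℕ} {k : ℕ} (hc : ∀ a, c a ≤ k) (hsum : ∑ a, c a + 1 = Fintype.card α * k) :
    ∃ b, ∀ a, c a + (if a = b then 1 else 0) = k := by
  obtain ⟨b, hb⟩ : ∃ b, c b < k := by
    by_contra! h
    have : ∑ a, c a = Fintype.card α * k := by simp [fun a ↦ (hc a).antisymm (h a)]
    omega
  have h_le : ∀ a ∈ univ, c a + (if a = b then 1 else 0) ≤ k := fun a _ ↦ by
    have := hc a
    split_ifs with h
    · exact h ▸ hb
    · exact this
  refine ⟨b, fun a ↦ (sum_eq_sum_iff_of_le h_le).1 ?_ a (mem_univ a)⟩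
  simpa [sum_add_distrib] using hsum

section MissingWord

variable {ι α : Type*} [Fintype ι] [Fintype α] [DecidableEq α] {m : ℕ} {C : Finset (ι → α)}
  {u : ι → α}

/-- Counting `u` as one more word of `C` makes every letter occur exactly `n` times in every
coordinate. Such a `u` is the word that extends `C`. -/
def IsMissingWord (C : Finset (ι → α)) (u : ι → α) : Prop :=
  ∀ i a, #(letterBlock C i a) + (if a = u i then 1 else 0) = Fintype.card ι

lemma exists_isMissingWord [Nontrivial α] (hm : Fintype.card ι = Fintype.card α * m)
    (hcard : #C + 1 = Fintype.card α * Fintype.card ι)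
    (hC : (C : Set (ι → α)).Pairwise fun v w ↦ agreement v w ≤ m) :
    ∃ u, IsMissingWord C u := by
  choose u hu using fun i ↦ exists_add_ite_eq_of_sum_add_one_eq (card_letterBlock_le hm hC i)
    (by rw [sum_card_letterBlock, hcard])
  exact ⟨u, hu⟩

namespace IsMissingWord

lemma card_letterBlock_letterBlock (hu : IsMissingWord C u)
    (hm : Fintype.card ι = Fintype.card α * m)
    (hC : (C : Set (ι → α)).Pairwise fun v w ↦ agreement v w ≤ m) {i j : ι} (hij : i ≠ j) (b : α) :
    #(letterBlock (letterBlock C i (u i)) j b) + (if b = u j then 1 else 0) = m := by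
  have h_full : ∀ a ∈ univ.erase (u i), #(letterBlock (letterBlock C i a) j b) = m := fun a ha ↦
    card_letterBlock_letterBlock_of_card_eq hm hC hij
      (by simpa [ne_of_mem_erase ha] using hu i a) b
  have h_total : ∑ a, #(letterBlock (letterBlock C i a) j b) = #(letterBlock C j b) := by
    simp_rw [letterBlock_comm C i j]
    exact sum_card_letterBlock _ i
  rw [← add_sum_erase _ _ (mem_univ (u i)), sum_congr rfl h_full, sum_const, smul_eq_mul] at h_total
  have h_q := card_erase_add_one (mem_univ (u i))
  rw [card_univ] at h_q
  have h_count := hu j b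
  rw [hm, ← h_q] at h_count
  linarith

lemma sum_agreement_add_agreement (hu : IsMissingWord C u)
    (hm : Fintype.card ι = Fintype.card α * m)
    (hC : (C : Set (ι → α)).Pairwise fun v w ↦ agreement v w ≤ m) {i : ι} {x : ι → α}
    (hx : x i = u i) :
    ∑ w ∈ letterBlock C i (u i), agreement w x + agreement x u =
      Fintype.card ι + #(letterBlock C i (u i)) * m := by
  classical
  have h_card : #(letterBlock C i (u i)) + 1 = Fintype.card ι := by simpa using hu i (u i)
  have h_agreement : agreement x u = ∑ j, if x j = u j then 1 else 0 := card_filter _ _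
  rw [sum_agreement, h_agreement, ← sum_add_distrib, ← add_sum_erase _ _ (mem_univ i),
    sum_congr rfl fun j hj ↦
      hu.card_letterBlock_letterBlock hm hC (ne_of_mem_erase hj).symm (x j),
    card_letterBlock_letterBlock_same, if_pos hx, if_pos hx, h_card, sum_const, smul_eq_mul,
    card_erase_of_mem (mem_univ i), card_univ, ← h_card, Nat.add_sub_cancel]

lemma agreement_eq_of_mem_letterBlock (hu : IsMissingWord C u)
    (hm : Fintype.card ι = Fintype.card α * m)
    (hC : (C : Set (ι → α)).Pairwise fun v w ↦ agreement v w ≤ m) {i : ι} {x : ι → α}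
    (hx : x ∈ letterBlock C i (u i)) : agreement x u = m := by
  have h_ge : ∀ w ∈ letterBlock C i (u i), m ≤ agreement w u := fun _ hw ↦ by
    have h_le := sum_agreement_add_le (hC.mono (coe_subset.2 (letterBlock_subset C i (u i)))) hw
    have h_eq := hu.sum_agreement_add_agreement hm hC (mem_letterBlock.1 hw).2
    omega
  have h_sum : ∑ _ ∈ letterBlock C i (u i), m = ∑ w ∈ letterBlock C i (u i), agreement w u := by
    have h_eq := hu.sum_agreement_add_agreement hm hC (i := i) (x := u) rfl
    rw [agreement_self] at h_eq
    rw [sum_const, smul_eq_mul]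
    omega
  exact ((sum_eq_sum_iff_of_le h_ge).1 h_sum x hx).symm

lemma agreement_le (hu : IsMissingWord C u) (hm : Fintype.card ι = Fintype.card α * m)
    (hC : (C : Set (ι → α)).Pairwise fun v w ↦ agreement v w ≤ m) {x : ι → α} (hx : x ∈ C) :
    agreement x u ≤ m := by
  by_cases h : ∃ i, x i = u i
  · obtain ⟨i, hi⟩ := h
    exact (hu.agreement_eq_of_mem_letterBlock hm hC (mem_letterBlock.2 ⟨hx, hi⟩)).le
  · simp [agreement, not_exists.1 h]

end IsMissingWord

end MissingWord

lemma exists_add_eq_and_eq_mul {q n d : ℕ} (hq : 0 < q) (h : q * d = (q - 1) * n) :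
    ∃ m, m + d = n ∧ n = q * m := by
  rw [Nat.sub_one_mul] at h
  have h_le : d ≤ n := Nat.le_of_mul_le_mul_left (h.le.trans (Nat.sub_le _ _)) hq
  refine ⟨n - d, Nat.sub_add_cancel h_le, ?_⟩
  rw [Nat.mul_sub, h, Nat.sub_sub_self (Nat.le_mul_of_pos_left n hq)]

theorem extend_symmetric_net_code_general {ι α : Type*} [Fintype ι] [Fintype α] [DecidableEq α]
    [Nontrivial α] {d : ℕ} (hqd : Fintype.card α * d = (Fintype.card α - 1) * Fintype.card ι)
    {C : Finset (ι → α)} (hcard : #C + 1 = Fintype.card α * Fintype.card ι)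
    (hC : ∀ u ∈ C, ∀ v ∈ C, u ≠ v → d ≤ hammingDist u v) :
    ∃ u, u ∉ C ∧ ∀ w ∈ C, d ≤ hammingDist u w := by
  obtain ⟨m, hmd, hm⟩ := exists_add_eq_and_eq_mul Fintype.card_pos hqd
  have hn : 0 < Fintype.card ι := Nat.pos_of_mul_pos_left (a := Fintype.card α) (by omega)
  have hd : 0 < d := Nat.pos_of_mul_pos_left <|
    hqd ▸ Nat.mul_pos (Nat.sub_pos_of_lt Fintype.one_lt_card) hn
  have hC' : (C : Set (ι → α)).Pairwise fun v w ↦ agreement v w ≤ m := fun v hv w hw hvw ↦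
    (le_hammingDist_iff_agreement_le hmd v w).1 (hC v hv w hw hvw)
  obtain ⟨u, hu⟩ := exists_isMissingWord hm hcard hC'
  have h_dist : ∀ w ∈ C, d ≤ hammingDist u w := fun _ hw ↦ by
    rw [hammingDist_comm, le_hammingDist_iff_agreement_le hmd]
    exact hu.agreement_le hm hC' hw
  exact ⟨u, fun huC ↦ hd.not_ge (hammingDist_self u ▸ h_dist u huC), h_dist⟩

/-- If `qd = (q-1)n`, then every `(n,d)_q`-code of cardinality `qn - 1` extends to
an `(n,d)_q`-code of cardinality `qn`: there is a word `u ∉ C` with Hamming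
distance at least `d` to every word of `C`. -/
theorem extend_symmetric_net_code (q n d : ℕ) (hq : 2 ≤ q) (hn : 0 < n) (hd : 0 < d)
    (hqd : q * d = (q - 1) * n)
    (C : Finset (Fin n → Fin q)) (hcard : C.card = q * n - 1)
    (hC : ∀ u ∈ C, ∀ v ∈ C, u ≠ v → d ≤ hammingDist u v) :
    ∃ u : Fin n → Fin q, u ∉ C ∧ ∀ w ∈ C, d ≤ hammingDist u w := by
  have : Nontrivial (Fin q) := Fin.nontrivial_iff_two_le.2 hq
  have : 0 < q * n := by positivity
  exact extend_symmetric_net_code_general (by simpa using hqd)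
    (by simp only [Fintype.card_fin]; omega) hC
end

section
/- A_4(9,6) ≤ 120 and A_4(10,6) ≤ 480: every code C ⊆ (Fin 4)^9 with minimum Hamming distance at least 6 has at most 120 elements, and every code C ⊆ (Fin 4)^{10} with minimum Hamming distance at least 6 has at most 480 elements. -/
/-!
Fix a quaternary code of length 9 in which distinct words agree in at most three places, and count
ordered pairs of words that agree in exactly two places. Fixing two coordinates leaves a *cell*, in
which distinct words agree in two or three places. Double counting agreements bounds a cell by 8
words (Plotkin) and shows that a cell with `z` words contains at most `(8 - z) * (7 - z)` and at
most `3 * (8 - z)` of the counted pairs. Fixing a single coordinate leaves a *block*, which has at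
most 32 words and, on summing over its cells, few counted pairs when it is nearly full.

In the opposite direction, a block with at least 31 words is so rigid that the cells into which a
foreign word `w` cuts it have known sizes. If `nₘ` words of the block agree with `w` in `m` places
and `w` lies in `t` small slices of the block, this gives `2 * n₂ + 6 * n₃ = 112 - t * (t - 1)`.
Modulo 3 this forces `n₂ > 0`, and even `n₂ ≥ 2` when `t = 0`, so two blocks share many counted
pairs as soon as one of them is nearly full. Averaging over the nine coordinates, a code with 121
words would have too few pairs inside blocks for the number of pairs that run between them.
-/

open Finset

namespace QaryCode

variable {ι α : Type*}

section Counting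

variable [DecidableEq α]

/-- The number of coordinates in which two words agree, complementary to the Hamming distance. -/
def agreement [Fintype ι] (u v : ι → α) : ℕ := #{i | u i = v i}

/-- Distinct words of `C` agree in at most `m` places, that is, `C` has minimum distance at least
`n - m`, where `n` is the length. -/
def AgreementLE [Fintype ι] (m : ℕ) (C : Finset (ι → α)) : Prop :=
  ∀ u ∈ C, ∀ v ∈ C, u ≠ v → agreement u v ≤ m

/-- The words of `C` with letter `a` at coordinate `i`. They are not punctured at `i`, so that
slices in different directions can be compared as subsets of one code. -/
def slice (C : Finset (ι → α)) (i : ι) (a : α) : Finset (ι → α) := {u ∈ C | u i = a}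

/-- All words of `C` coincide on the coordinates in `I`. -/
def ConstantOn (C : Finset (ι → α)) (I : Finset ι) : Prop :=
  ∀ u ∈ C, ∀ v ∈ C, ∀ i ∈ I, u i = v i

/-- The ordered pairs in `A × B` that agree in exactly `m` places. -/
def agreeingPairs [Fintype ι] (m : ℕ) (A B : Finset (ι → α)) : Finset ((ι → α) × (ι → α)) :=
  {p ∈ A ×ˢ B | agreement p.1 p.2 = m}

/-- The pairs in `S` whose two words agree at coordinate `k`. -/
def collisions (S : Finset ((ι → α) × (ι → α))) (k : ι) : Finset ((ι → α) × (ι → α)) :=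
  {p ∈ S | p.1 k = p.2 k}

lemma mem_slice {C : Finset (ι → α)} {i : ι} {a : α} {u : ι → α} :
    u ∈ slice C i a ↔ u ∈ C ∧ u i = a := mem_filter

lemma slice_subset (C : Finset (ι → α)) (i : ι) (a : α) : slice C i a ⊆ C := filter_subset _ _

lemma slice_comm (C : Finset (ι → α)) (i j : ι) (a b : α) :
    slice (slice C i a) j b = slice (slice C j b) i a := filter_comm _ _ _

lemma sum_card_slice [Fintype α] (C : Finset (ι → α)) (i : ι) :
    ∑ a, #(slice C i a) = #C :=
  (card_eq_sum_card_fiberwise fun _ _ => mem_coe.2 (mem_univ _)).symm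

lemma ConstantOn.slice_insert [DecidableEq ι] {C : Finset (ι → α)} {I : Finset ι}
    (hC : ConstantOn C I) (i : ι) (a : α) : ConstantOn (slice C i a) (insert i I) := by
  intro u hu v hv j hj
  rw [mem_slice] at hu hv
  obtain rfl | hj := mem_insert.1 hj
  · rw [hu.2, hv.2]
  · exact hC u hu.1 v hv.1 j hj

lemma constantOn_slice (C : Finset (ι → α)) (i : ι) (a : α) : ConstantOn (slice C i a) {i} := by
  intro u hu v hv j hj
  rw [mem_singleton.1 hj, (mem_slice.1 hu).2, (mem_slice.1 hv).2]

lemma sum_card_collisions (S : Finset ((ι → α) × (ι → α))) (J : Finset ι) :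
    ∑ k ∈ J, #(collisions S k) = ∑ p ∈ S, #{k ∈ J | p.1 k = p.2 k} := by
  simp only [collisions, card_filter]
  exact sum_comm

lemma card_collisions_product [Fintype α] (C : Finset (ι → α)) (k : ι) :
    #(collisions (C ×ˢ C) k) = ∑ a, #(slice C k a) ^ 2 := by
  rw [card_eq_sum_card_fiberwise (f := fun p => p.1 k) (t := univ)
    fun _ _ => mem_coe.2 (mem_univ _)]
  refine sum_congr rfl fun a _ => ?_
  rw [sq, ← card_product]
  congr 1
  ext p
  simp only [collisions, slice, mem_filter, mem_product]
  grind

lemma card_le_card_collisions_product (C : Finset (ι → α)) (k : ι) :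
    #C ≤ #(collisions (C ×ˢ C) k) :=
  card_le_card_of_injOn (fun u => (u, u)) (fun u hu => by simpa [collisions] using hu)
    fun _ _ _ _ h => congrArg Prod.fst h

lemma sq_card_le_card_mul_collisions [Fintype α] (C : Finset (ι → α)) (k : ι) :
    #C ^ 2 ≤ Fintype.card α * #(collisions (C ×ˢ C) k) := by
  rw [card_collisions_product, ← sum_card_slice C k]
  exact sq_sum_le_card_mul_sum_sq

lemma three_mul_le_sq_add_two (x : ℕ) : 3 * x ≤ x ^ 2 + 2 := by
  obtain _ | _ | x := x
  · simp
  · simp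
  · nlinarith

lemma three_mul_card_le_collisions_add [Fintype α] (C : Finset (ι → α)) (k : ι) :
    3 * #C ≤ #(collisions (C ×ˢ C) k) + 2 * Fintype.card α := by
  calc 3 * #C = ∑ a, 3 * #(slice C k a) := by rw [← mul_sum, sum_card_slice]
    _ ≤ ∑ a, (#(slice C k a) ^ 2 + 2) := sum_le_sum fun a _ => three_mul_le_sq_add_two _
    _ = #(collisions (C ×ˢ C) k) + 2 * Fintype.card α := by
      rw [sum_add_distrib, card_collisions_product, sum_const, card_univ, smul_eq_mul, mul_comm 2]

lemma card_slice_eq_one_or_two [Fintype α] {C : Finset (ι → α)} {k : ι}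
    (h : 3 * #C = #(collisions (C ×ˢ C) k) + 2 * Fintype.card α) (a : α) :
    #(slice C k a) = 1 ∨ #(slice C k a) = 2 := by
  have hsum : ∑ a, 3 * #(slice C k a) = ∑ a, (#(slice C k a) ^ 2 + 2) := by
    rw [← mul_sum, sum_card_slice, h, sum_add_distrib, card_collisions_product, sum_const,
      card_univ, smul_eq_mul, mul_comm 2]
  have heq : 3 * #(slice C k a) = #(slice C k a) ^ 2 + 2 :=
    (sum_eq_sum_iff_of_le fun a _ => three_mul_le_sq_add_two _).1 hsum a (mem_univ a)
  have hle : #(slice C k a) ≤ 2 := by nlinarith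
  interval_cases #(slice C k a) <;> omega

variable [Fintype ι]

lemma agreement_comm (u v : ι → α) : agreement u v = agreement v u := by
  simp only [agreement, eq_comm]

lemma agreement_add_hammingDist (u v : ι → α) :
    agreement u v + hammingDist u v = Fintype.card ι :=
  card_filter_add_card_filter_not fun i => u i = v i

lemma AgreementLE.subset {m : ℕ} {C D : Finset (ι → α)} (hC : AgreementLE m C) (hDC : D ⊆ C) :
    AgreementLE m D :=
  fun u hu v hv => hC u (hDC hu) v (hDC hv)

protected lemma AgreementLE.slice {m : ℕ} {C : Finset (ι → α)} (hC : AgreementLE m C) (i : ι)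
    (a : α) : AgreementLE m (slice C i a) :=
  hC.subset (slice_subset C i a)

lemma card_agreeingPairs_comm (m : ℕ) (A B : Finset (ι → α)) :
    #(agreeingPairs m A B) = #(agreeingPairs m B A) := by
  refine card_equiv (Equiv.prodComm _ _) fun p => ?_
  simp [agreeingPairs, agreement_comm p.1, and_comm]

lemma card_agreeingPairs_eq_sum (m : ℕ) (A B : Finset (ι → α)) :
    #(agreeingPairs m A B) = ∑ u ∈ A, #{v ∈ B | agreement u v = m} := by
  simp only [agreeingPairs, card_filter, sum_product]

lemma card_agreeingPairs_eq_sum_slice [Fintype α] (m : ℕ) (C : Finset (ι → α)) (i : ι) :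
    #(agreeingPairs m C C) = ∑ a, ∑ b, #(agreeingPairs m (slice C i a) (slice C i b)) := by
  rw [card_eq_sum_card_fiberwise (f := fun p => (p.1 i, p.2 i)) (t := univ)
    fun _ _ => mem_coe.2 (mem_univ _), Fintype.sum_prod_type]
  refine sum_congr rfl fun a _ => sum_congr rfl fun b _ => ?_
  congr 1
  ext p
  simp only [agreeingPairs, slice, mem_filter, mem_product, Prod.mk.injEq]
  tauto

lemma card_collisions_agreeingPairs [Fintype α] (m : ℕ) (C : Finset (ι → α)) (k : ι) :
    #(collisions (agreeingPairs m C C) k)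
      = ∑ a, #(agreeingPairs m (slice C k a) (slice C k a)) := by
  rw [card_eq_sum_card_fiberwise (f := fun p => p.1 k) (t := univ)
    fun _ _ => mem_coe.2 (mem_univ _)]
  refine sum_congr rfl fun a _ => ?_
  congr 1
  ext p
  simp only [collisions, agreeingPairs, slice, mem_filter, mem_product]
  grind

lemma sum_card_collisions_agreeingPairs (m : ℕ) (C : Finset (ι → α)) :
    ∑ k, #(collisions (agreeingPairs m C C) k) = m * #(agreeingPairs m C C) := by
  rw [sum_card_collisions, mul_comm, ← smul_eq_mul, ← sum_const]
  exact sum_congr rfl fun p hp => (mem_filter.1 hp).2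

lemma ConstantOn.collisions_agreeingPairs {C : Finset (ι → α)} {I : Finset ι}
    (hC : ConstantOn C I) {i : ι} (hi : i ∈ I) (m : ℕ) :
    collisions (agreeingPairs m C C) i = agreeingPairs m C C := by
  refine filter_true_of_mem fun p hp => ?_
  have hp := mem_product.1 (mem_filter.1 hp).1
  exact hC p.1 hp.1 p.2 hp.2 i hi

lemma sum_offDiag_card_slice_slice (C : Finset (ι → α)) (w : ι → α) :
    ∑ p ∈ univ.offDiag, #(slice (slice C p.1 (w p.1)) p.2 (w p.2))
      = ∑ v ∈ C, agreement w v * (agreement w v - 1) := by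
  classical
  have hv (v : ι → α) : agreement w v * (agreement w v - 1)
      = #{p ∈ univ.offDiag | v p.1 = w p.1 ∧ v p.2 = w p.2} := by
    rw [Nat.mul_sub_one, agreement, ← offDiag_card]
    congr 1
    ext p
    simp only [mem_offDiag, mem_filter, mem_univ, true_and]
    grind
  simp only [hv, slice, filter_filter, card_filter]
  exact sum_comm

section Cells

variable [DecidableEq ι] {Z : Finset (ι → α)} {I : Finset ι}

lemma ConstantOn.agreement_eq (hZ : ConstantOn Z I) {u v : ι → α} (hu : u ∈ Z) (hv : v ∈ Z) :
    agreement u v = #I + #{k ∈ Iᶜ | u k = v k} := by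
  rw [agreement, ← union_compl I, filter_union,
    card_union_of_disjoint (disjoint_filter_filter disjoint_compl_right),
    filter_true_of_mem (hZ u hu v hv)]

/-- Two distinct words agree in `#I` or `#I + 1` places, so each pair off the diagonal is counted
exactly once on the left; both sides count each diagonal pair `#Iᶜ + 1` times. -/
lemma ConstantOn.card_agreeingPairs_add_sum_collisions (hZ : ConstantOn Z I) (hI : Iᶜ.Nonempty)
    (hag : AgreementLE (#I + 1) Z) :
    #(agreeingPairs #I Z Z) + ∑ k ∈ Iᶜ, #(collisions (Z ×ˢ Z) k) + #Z
      = #Z ^ 2 + #Iᶜ * #Z := by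
  have hdiag : #Z = ∑ p ∈ Z ×ˢ Z, if p.1 = p.2 then 1 else 0 := by
    simp only [sum_product, sum_ite_eq, sum_ite_mem, inter_self, card_eq_sum_ones]
  have hpair {u v : ι → α} (hu : u ∈ Z) (hv : v ∈ Z) :
      (if agreement u v = #I then 1 else 0) + #{k ∈ Iᶜ | u k = v k} + (if u = v then 1 else 0)
        = 1 + #Iᶜ * if u = v then 1 else 0 := by
    have heq := hZ.agreement_eq hu hv
    have hpos := hI.card_pos
    by_cases huv : u = v
    · subst huv
      simp only [filter_true] at heq
      simp only [heq, filter_true, if_true]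
      rw [if_neg (by omega)]
      omega
    · have hle := hag u hu v hv huv
      simp only [heq, huv, if_false]
      split_ifs <;> omega
  calc #(agreeingPairs #I Z Z) + ∑ k ∈ Iᶜ, #(collisions (Z ×ˢ Z) k) + #Z
      = ∑ p ∈ Z ×ˢ Z, (1 + #Iᶜ * if p.1 = p.2 then 1 else 0) := by
        rw [← sum_congr rfl fun p hp => hpair (mem_product.1 hp).1 (mem_product.1 hp).2,
          sum_add_distrib, sum_add_distrib, ← hdiag, sum_card_collisions, agreeingPairs,
          card_filter]
    _ = #Z ^ 2 + #Iᶜ * #Z := by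
        rw [sum_add_distrib, ← mul_sum, ← hdiag, ← card_eq_sum_ones, card_product, sq]

end Cells

end Counting

section Shortening

variable [DecidableEq α] {n : ℕ}

lemma hammingDist_tail {u v : Fin (n + 1) → α} (h : u 0 = v 0) :
    hammingDist (Fin.tail u) (Fin.tail v) = hammingDist u v := by
  rw [hammingDist, hammingDist, Fin.card_filter_univ_succ, if_neg (not_not.2 h)]
  rfl

/-- The inequality `A_q(n + 1, d) ≤ q * A_q(n, d)`. -/
lemma card_le_card_alphabet_mul [Fintype α] {d M : ℕ}
    (hM : ∀ C : Finset (Fin n → α),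
      (∀ u ∈ C, ∀ v ∈ C, u ≠ v → d ≤ hammingDist u v) → #C ≤ M)
    {C : Finset (Fin (n + 1) → α)} (hC : ∀ u ∈ C, ∀ v ∈ C, u ≠ v → d ≤ hammingDist u v) :
    #C ≤ Fintype.card α * M := by
  have hslice (a : α) : #(slice C 0 a) ≤ M := by
    have hinj : Set.InjOn Fin.tail (slice C 0 a : Set (Fin (n + 1) → α)) := by
      intro u hu v hv huv
      rw [← Fin.cons_self_tail u, ← Fin.cons_self_tail v, (mem_slice.1 hu).2,
        (mem_slice.1 hv).2, huv]
    rw [← card_image_of_injOn hinj]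
    refine hM _ (forall_mem_image.2 fun u hu => forall_mem_image.2 fun v hv huv => ?_)
    rw [mem_slice] at hu hv
    rw [hammingDist_tail (hu.2.trans hv.2.symm)]
    exact hC u hu.1 v hv.1 fun h => huv (congrArg Fin.tail h)
  calc #C = ∑ a, #(slice C 0 a) := (sum_card_slice C 0).symm
    _ ≤ Fintype.card α * M := by simpa using sum_le_card_nsmul univ _ M fun a _ => hslice a

end Shortening

section DeficitBound

/-- The bound on the number of ordered pairs with exactly two agreements in a cell, as a function of
the number `x` of words by which the cell falls short of the maximum 8. -/
def deficitBound (x : ℕ) : ℕ := min (x * (x - 1)) (3 * x)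

lemma sum_deficitBound_le {κ : Type*} (s : Finset κ) (x : κ → ℕ) :
    ∑ b ∈ s, deficitBound (x b) ≤ deficitBound (∑ b ∈ s, x b) := by
  refine le_min ?_ ?_
  · calc ∑ b ∈ s, deficitBound (x b) ≤ ∑ b ∈ s, x b * (∑ c ∈ s, x c - 1) := by
          refine sum_le_sum fun b hb => (min_le_left _ _).trans ?_
          gcongr
          exact single_le_sum_of_canonicallyOrdered hb
      _ = (∑ b ∈ s, x b) * (∑ b ∈ s, x b - 1) := (sum_mul _ _ _).symm
  · rw [mul_sum]
    exact sum_le_sum fun b _ => min_le_right _ _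

end DeficitBound

section Cells

variable {Z : Finset (Fin 9 → Fin 4)} {I : Finset (Fin 9)}

lemma ConstantOn.card_agreeingPairs_two_add_sum_collisions (hZ : ConstantOn Z I) (hI : #I = 2)
    (hag : AgreementLE 3 Z) :
    #(agreeingPairs 2 Z Z) + ∑ k ∈ Iᶜ, #(collisions (Z ×ˢ Z) k) = #Z ^ 2 + 6 * #Z := by
  have hIc : #Iᶜ = 7 := by rw [card_compl, hI, Fintype.card_fin]
  have h := hZ.card_agreeingPairs_add_sum_collisions (card_pos.1 (by omega)) (by rwa [hI])
  rw [hI, hIc] at h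
  omega

lemma ConstantOn.card_cell_le (hZ : ConstantOn Z I) (hI : #I = 2) (hag : AgreementLE 3 Z) :
    #Z ≤ 8 := by
  have hid := hZ.card_agreeingPairs_two_add_sum_collisions hI hag
  have hsum : 7 * #Z ^ 2 ≤ 4 * ∑ k ∈ Iᶜ, #(collisions (Z ×ˢ Z) k) := by
    simpa [card_compl, hI, mul_sum] using
      card_nsmul_le_sum Iᶜ _ _ fun k _ => sq_card_le_card_mul_collisions Z k
  by_contra! h
  nlinarith

lemma ConstantOn.card_agreeingPairs_cell_le (hZ : ConstantOn Z I) (hI : #I = 2)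
    (hag : AgreementLE 3 Z) : #(agreeingPairs 2 Z Z) ≤ deficitBound (8 - #Z) := by
  have hid := hZ.card_agreeingPairs_two_add_sum_collisions hI hag
  have hle := hZ.card_cell_le hI hag
  have hIc : #Iᶜ = 7 := by rw [card_compl, hI, Fintype.card_fin]
  have hdiag : 7 * #Z ≤ ∑ k ∈ Iᶜ, #(collisions (Z ×ˢ Z) k) := by
    simpa [hIc] using
      card_nsmul_le_sum Iᶜ _ _ fun k _ => card_le_card_collisions_product Z k
  have hsmall : 7 * (3 * #Z) ≤ ∑ k ∈ Iᶜ, #(collisions (Z ×ˢ Z) k) + 7 * 8 := by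
    simpa [hIc, sum_add_distrib] using
      card_nsmul_le_sum Iᶜ _ _ fun k _ => three_mul_card_le_collisions_add Z k
  generalize #Z = z at *
  refine le_min ?_ ?_ <;> interval_cases z <;> simp only [Nat.reduceSub, Nat.reduceMul] <;> omega

/-- For 7 or 8 words the estimate `3 * #Z ≤ #(collisions (Z ×ˢ Z) k) + 8`, summed over the seven
free coordinates, leaves no slack. -/
lemma ConstantOn.card_slice_cell_eq_one_or_two (hZ : ConstantOn Z I) (hI : #I = 2)
    (hag : AgreementLE 3 Z) (h7 : 7 ≤ #Z) {k : Fin 9} (hk : k ∉ I) (c : Fin 4) :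
    #(slice Z k c) = 1 ∨ #(slice Z k c) = 2 := by
  have hid := hZ.card_agreeingPairs_two_add_sum_collisions hI hag
  have hle := hZ.card_cell_le hI hag
  have hIc : #Iᶜ = 7 := by rw [card_compl, hI, Fintype.card_fin]
  have hterm : ∀ k ∈ Iᶜ, 3 * #Z ≤ #(collisions (Z ×ˢ Z) k) + 8 :=
    fun k _ => three_mul_card_le_collisions_add Z k
  have hsum : ∑ k ∈ Iᶜ, 3 * #Z = ∑ k ∈ Iᶜ, (#(collisions (Z ×ˢ Z) k) + 8) := by
    refine (sum_le_sum hterm).antisymm ?_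
    rw [sum_add_distrib, sum_const, sum_const, hIc]
    generalize #Z = z at *
    interval_cases z <;> simp only [smul_eq_mul] <;> omega
  exact card_slice_eq_one_or_two
    ((sum_eq_sum_iff_of_le hterm).1 hsum k (mem_compl.2 hk)) c

end Cells

section Blocks

variable {B : Finset (Fin 9 → Fin 4)} {i j k : Fin 9}

lemma ConstantOn.card_slice_block_le (hB : ConstantOn B {i}) (hag : AgreementLE 3 B)
    (hji : j ≠ i) (b : Fin 4) : #(slice B j b) ≤ 8 :=
  (hB.slice_insert j b).card_cell_le (card_pair hji) (hag.slice j b)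

lemma ConstantOn.sum_deficit_slice_block (hB : ConstantOn B {i}) (hag : AgreementLE 3 B)
    (hji : j ≠ i) : ∑ b, (8 - #(slice B j b)) = 32 - #B := by
  rw [sum_tsub_distrib _ fun b _ => hB.card_slice_block_le hag hji b, sum_card_slice]
  simp

lemma ConstantOn.card_block_le (hB : ConstantOn B {i}) (hag : AgreementLE 3 B) : #B ≤ 32 := by
  obtain ⟨j, hji⟩ := exists_ne i
  rw [← sum_card_slice B j]
  simpa using sum_le_card_nsmul univ _ 8 fun b _ => hB.card_slice_block_le hag hji b

lemma ConstantOn.card_collisions_block_le (hB : ConstantOn B {i}) (hag : AgreementLE 3 B)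
    (hji : j ≠ i) : #(collisions (agreeingPairs 2 B B) j) ≤ deficitBound (32 - #B) := by
  rw [card_collisions_agreeingPairs, ← hB.sum_deficit_slice_block hag hji]
  refine (sum_le_sum fun b _ => ?_).trans (sum_deficitBound_le _ _)
  exact (hB.slice_insert j b).card_agreeingPairs_cell_le (card_pair hji) (hag.slice j b)

/-- A pair with two agreements in a block agrees in exactly one further coordinate, so it lies in
exactly one of the cells in the remaining eight directions. -/
lemma ConstantOn.card_agreeingPairs_block_le (hB : ConstantOn B {i}) (hag : AgreementLE 3 B) :
    #(agreeingPairs 2 B B) ≤ 8 * deficitBound (32 - #B) := by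
  have hsum := sum_card_collisions_agreeingPairs 2 B
  rw [← add_sum_erase _ _ (mem_univ i), hB.collisions_agreeingPairs (mem_singleton_self i)] at hsum
  have hle := sum_le_card_nsmul (univ.erase i) _ _ fun j hj =>
    hB.card_collisions_block_le hag (ne_of_mem_erase hj)
  rw [card_erase_of_mem (mem_univ i), card_univ, Fintype.card_fin, smul_eq_mul] at hle
  omega

lemma ConstantOn.card_slice_block_eq_seven_or_eight (hB : ConstantOn B {i})
    (hag : AgreementLE 3 B) (h31 : 31 ≤ #B) (hji : j ≠ i) (b : Fin 4) :
    #(slice B j b) = 7 ∨ #(slice B j b) = 8 := by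
  have hle := hB.card_slice_block_le hag hji b
  have hdeficit := hB.sum_deficit_slice_block hag hji
  have hterm := single_le_sum_of_canonicallyOrdered (f := fun b => 8 - #(slice B j b))
    (mem_univ b)
  omega

lemma ConstantOn.card_slice_block_eq_eight (hB : ConstantOn B {i}) (hag : AgreementLE 3 B)
    (h31 : 31 ≤ #B) (hji : j ≠ i) {b c : Fin 4} (hb : #(slice B j b) = 7) (hcb : c ≠ b) :
    #(slice B j c) = 8 := by
  have hle := hB.card_slice_block_le hag hji c
  have hdeficit := hB.sum_deficit_slice_block hag hji
  have hpair := sum_le_sum_of_subset (f := fun b => 8 - #(slice B j b)) (subset_univ {c, b})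
  rw [sum_pair hcb, hb] at hpair
  omega

lemma ConstantOn.card_slice_slice_block_eq_two (hB : ConstantOn B {i}) (hag : AgreementLE 3 B)
    (hji : j ≠ i) (hki : k ≠ i) (hkj : k ≠ j) {b : Fin 4} (hb : #(slice B j b) = 8)
    (c : Fin 4) : #(slice (slice B j b) k c) = 2 := by
  have hk : k ∉ ({j, i} : Finset (Fin 9)) := by simp [hkj, hki]
  have hle : ∀ c ∈ univ, #(slice (slice B j b) k c) ≤ 2 := fun c _ => by
    have := (hB.slice_insert j b).card_slice_cell_eq_one_or_two (card_pair hji) (hag.slice j b)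
      (by omega) hk c
    omega
  refine (sum_eq_sum_iff_of_le hle).1 ?_ c (mem_univ c)
  rw [sum_card_slice, hb]
  simp

lemma ConstantOn.card_slice_slice_block_eq_one (hB : ConstantOn B {i}) (hag : AgreementLE 3 B)
    (h31 : 31 ≤ #B) (hji : j ≠ i) (hki : k ≠ i) (hkj : k ≠ j) {b c : Fin 4}
    (hb : #(slice B j b) = 7) (hc : #(slice B k c) = 7) :
    #(slice (slice B j b) k c) = 1 := by
  have hother : ∀ c' ∈ univ.erase c, #(slice (slice B j b) k c') = 2 := fun c' hc' => by
    rw [slice_comm]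
    exact hB.card_slice_slice_block_eq_two hag hki hji hkj.symm
      (hB.card_slice_block_eq_eight hag h31 hki hc (ne_of_mem_erase hc')) b
  have hsum := sum_card_slice (slice B j b) k
  rw [← add_sum_erase _ _ (mem_univ c), sum_congr rfl hother, hb, sum_const,
    card_erase_of_mem (mem_univ c), card_univ, Fintype.card_fin, smul_eq_mul] at hsum
  omega

lemma ConstantOn.card_slice_slice_block (hB : ConstantOn B {i}) (hag : AgreementLE 3 B)
    (h31 : 31 ≤ #B) (hji : j ≠ i) (hki : k ≠ i) (hkj : k ≠ j) (b c : Fin 4) :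
    #(slice (slice B j b) k c)
      = if #(slice B j b) = 7 ∧ #(slice B k c) = 7 then 1 else 2 := by
  split_ifs with h
  · exact hB.card_slice_slice_block_eq_one hag h31 hji hki hkj h.1 h.2
  · have hb := hB.card_slice_block_eq_seven_or_eight hag h31 hji b
    have hc := hB.card_slice_block_eq_seven_or_eight hag h31 hki c
    obtain hb | hc : #(slice B j b) = 8 ∨ #(slice B k c) = 8 := by omega
    · exact hB.card_slice_slice_block_eq_two hag hji hki hkj hb c
    · rw [slice_comm]
      exact hB.card_slice_slice_block_eq_two hag hki hji hkj.symm hc b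

end Blocks

section ForeignWord

variable {B : Finset (Fin 9 → Fin 4)} {i : Fin 9} {w : Fin 9 → Fin 4}

/-- The directions other than `i` in which `w` selects a slice of `B` with only 7 words. -/
def shortDirections (B : Finset (Fin 9 → Fin 4)) (i : Fin 9) (w : Fin 9 → Fin 4) :
    Finset (Fin 9) := {j ∈ {i}ᶜ | #(slice B j (w j)) = 7}

lemma sum_agreement_mul_pred {ι α : Type*} [Fintype ι] [DecidableEq α] {B : Finset (ι → α)}
    {w : ι → α} (hw : ∀ v ∈ B, agreement w v ≤ 3) :
    ∑ v ∈ B, agreement w v * (agreement w v - 1)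
      = 2 * #{v ∈ B | agreement w v = 2} + 6 * #{v ∈ B | agreement w v = 3} := by
  rw [card_filter, card_filter, mul_sum, mul_sum, ← sum_add_distrib]
  refine sum_congr rfl fun v hv => ?_
  have hv := hw v hv
  interval_cases agreement w v <;> rfl

lemma card_shortDirections_mul_pred (B : Finset (Fin 9 → Fin 4)) (i : Fin 9) (w : Fin 9 → Fin 4) :
    #(shortDirections B i w) * (#(shortDirections B i w) - 1)
      = ∑ p ∈ ({i}ᶜ : Finset (Fin 9)).offDiag,
        if #(slice B p.1 (w p.1)) = 7 ∧ #(slice B p.2 (w p.2)) = 7 then 1 else 0 := by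
  rw [Nat.mul_sub_one, ← offDiag_card, ← card_filter]
  refine congrArg card (Finset.ext fun p => ?_)
  simp only [shortDirections, mem_offDiag, mem_filter]
  exact ⟨fun ⟨⟨hp₁, hs₁⟩, ⟨hp₂, hs₂⟩, hne⟩ => ⟨⟨hp₁, hp₂, hne⟩, hs₁, hs₂⟩,
    fun ⟨⟨hp₁, hp₂, hne⟩, hs₁, hs₂⟩ => ⟨⟨hp₁, hs₁⟩, ⟨hp₂, hs₂⟩, hne⟩⟩

/-- Two coordinates other than `i` cut `B` into cells of which `w` selects one with 2 words, or
with 1 word if both directions are short; there are `8 * 7` pairs of such coordinates. -/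
lemma ConstantOn.sum_agreement_mul_pred_add (hB : ConstantOn B {i}) (hag : AgreementLE 3 B)
    (h31 : 31 ≤ #B) (hwi : ∀ v ∈ B, v i ≠ w i) :
    ∑ v ∈ B, agreement w v * (agreement w v - 1)
      + #(shortDirections B i w) * (#(shortDirections B i w) - 1) = 112 := by
  have hempty (j : Fin 9) : slice (slice B j (w j)) i (w i) = ∅ :=
    filter_eq_empty_iff.2 fun v hv => hwi v (mem_slice.1 hv).1
  have hfree : ∑ p ∈ univ.offDiag, #(slice (slice B p.1 (w p.1)) p.2 (w p.2))
      = ∑ p ∈ ({i}ᶜ : Finset (Fin 9)).offDiag, #(slice (slice B p.1 (w p.1)) p.2 (w p.2)) := by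
    refine (sum_subset (offDiag_mono (subset_univ _)) fun p hp hpi => ?_).symm
    obtain rfl | rfl : p.1 = i ∨ p.2 = i := by
      simp only [mem_offDiag, mem_univ, mem_compl, mem_singleton] at hp hpi
      tauto
    · rw [slice_comm, hempty, card_empty]
    · rw [hempty, card_empty]
  have hcell : ∀ p ∈ ({i}ᶜ : Finset (Fin 9)).offDiag,
      #(slice (slice B p.1 (w p.1)) p.2 (w p.2))
        + (if #(slice B p.1 (w p.1)) = 7 ∧ #(slice B p.2 (w p.2)) = 7 then 1 else 0) = 2 := by
    intro p hp
    simp only [mem_offDiag, mem_compl, mem_singleton] at hp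
    rw [hB.card_slice_slice_block hag h31 hp.1 hp.2.1 (Ne.symm hp.2.2)]
    split_ifs <;> rfl
  have hpairs : #({i}ᶜ : Finset (Fin 9)).offDiag = 56 := by
    rw [offDiag_card, card_compl, card_singleton, Fintype.card_fin]
  rw [← sum_offDiag_card_slice_slice, hfree, card_shortDirections_mul_pred, ← sum_add_distrib,
    sum_congr rfl hcell, sum_const, hpairs, smul_eq_mul]

lemma ConstantOn.shortDirections_eq_empty (hB : ConstantOn B {i}) (hag : AgreementLE 3 B)
    (h32 : #B = 32) : shortDirections B i w = ∅ := by
  refine filter_eq_empty_iff.2 fun j hj h7 => ?_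
  have hji : j ≠ i := by simpa using hj
  have h := hB.sum_deficit_slice_block hag hji
  rw [h32, Nat.sub_self, sum_eq_zero_iff] at h
  have := h (w j) (mem_univ _)
  omega

/-- Modulo 3, the product `t * (t - 1)` is 0 or 2, whereas 112 is 1. -/
lemma pos_of_two_mul_add_six_mul {n₂ n₃ t : ℕ} (h : 2 * n₂ + 6 * n₃ + t * (t - 1) = 112) :
    0 < n₂ := by
  by_contra! hn
  obtain _ | t := t
  · omega
  have hmod : (t + 1) * t % 3 = 0 ∨ (t + 1) * t % 3 = 2 := by
    obtain ht | ht | ht : t % 3 = 0 ∨ t % 3 = 1 ∨ t % 3 = 2 := by omega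
    all_goals simp [Nat.mul_mod, Nat.add_mod, ht]
  rw [Nat.add_sub_cancel] at h
  omega

lemma ConstantOn.card_sub_thirty_le (hB : ConstantOn B {i}) (hag : AgreementLE 3 B)
    (hwi : ∀ v ∈ B, v i ≠ w i) (hw : ∀ v ∈ B, agreement w v ≤ 3) :
    #B - 30 ≤ #{v ∈ B | agreement w v = 2} := by
  have hle := hB.card_block_le hag
  by_cases h31 : 31 ≤ #B
  · have hmoment := hB.sum_agreement_mul_pred_add hag h31 hwi
    rw [sum_agreement_mul_pred hw] at hmoment
    have hpos := pos_of_two_mul_add_six_mul hmoment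
    by_cases h32 : #B = 32
    · rw [hB.shortDirections_eq_empty hag h32, card_empty] at hmoment
      omega
    · omega
  · omega

end ForeignWord

section Codes

variable {C : Finset (Fin 9 → Fin 4)}

/-- The lower bound for the number of pairs with exactly two agreements between two blocks with
`m` and `n` words. -/
def crossBound (m n : ℕ) : ℕ := max ((m - 30) * n) ((n - 30) * m)

lemma AgreementLE.card_sub_thirty_mul_le (hC : AgreementLE 3 C) (i : Fin 9) {a b : Fin 4}
    (hab : a ≠ b) :
    (#(slice C i a) - 30) * #(slice C i b) ≤ #(agreeingPairs 2 (slice C i a) (slice C i b)) := by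
  rw [card_agreeingPairs_comm, card_agreeingPairs_eq_sum, mul_comm, ← smul_eq_mul]
  refine card_nsmul_le_sum _ _ _ fun w hw => ?_
  have hwi : ∀ v ∈ slice C i a, v i ≠ w i := fun v hv => by
    rwa [(mem_slice.1 hv).2, (mem_slice.1 hw).2]
  refine (constantOn_slice C i a).card_sub_thirty_le (hC.slice i a) hwi fun v hv => ?_
  exact hC w (mem_slice.1 hw).1 v (mem_slice.1 hv).1 fun h => hwi v hv (h ▸ rfl)

lemma AgreementLE.crossBound_le (hC : AgreementLE 3 C) (i : Fin 9) {a b : Fin 4} (hab : a ≠ b) :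
    crossBound #(slice C i a) #(slice C i b) ≤ #(agreeingPairs 2 (slice C i a) (slice C i b)) :=
  max_le (hC.card_sub_thirty_mul_le i hab) <| by
    rw [card_agreeingPairs_comm]
    exact hC.card_sub_thirty_mul_le i hab.symm

lemma AgreementLE.card_collisions_le (hC : AgreementLE 3 C) (i : Fin 9) :
    #(collisions (agreeingPairs 2 C C) i) ≤ 8 * ∑ a, deficitBound (32 - #(slice C i a)) := by
  rw [card_collisions_agreeingPairs, mul_sum]
  exact sum_le_sum fun a _ =>
    (constantOn_slice C i a).card_agreeingPairs_block_le (hC.slice i a)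

lemma AgreementLE.card_collisions_add_sum_crossBound_le (hC : AgreementLE 3 C) (i : Fin 9) :
    #(collisions (agreeingPairs 2 C C) i)
      + ∑ a, ∑ b ∈ univ.erase a, crossBound #(slice C i a) #(slice C i b)
      ≤ #(agreeingPairs 2 C C) := by
  rw [card_collisions_agreeingPairs, card_agreeingPairs_eq_sum_slice 2 C i, ← sum_add_distrib]
  refine sum_le_sum fun a _ => ?_
  rw [← add_sum_erase univ _ (mem_univ a)]
  gcongr with b hb
  exact hC.crossBound_le i (ne_of_mem_erase hb).symm

lemma exists_two_mul_card_agreeingPairs_le (C : Finset (Fin 9 → Fin 4)) :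
    ∃ i, 2 * #(agreeingPairs 2 C C) ≤ 9 * #(collisions (agreeingPairs 2 C C) i) := by
  obtain ⟨i, -, hi⟩ := exists_le_of_sum_le (s := univ) univ_nonempty
    (f := fun _ : Fin 9 => 2 * #(agreeingPairs 2 C C))
    (g := fun i => 9 * #(collisions (agreeingPairs 2 C C) i))
    (by rw [← mul_sum _ _ 9, sum_card_collisions_agreeingPairs]; simp)
  exact ⟨i, hi⟩

/-- All four block sizes lie between 25 and 32, which leaves finitely many cases to evaluate. -/
lemma sum_deficitBound_lt_sum_crossBound {m : Fin 4 → ℕ} (hm : ∀ a, m a ≤ 32)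
    (hsum : ∑ a, m a = 121) :
    28 * ∑ a, deficitBound (32 - m a) < ∑ a, ∑ b ∈ univ.erase a, crossBound (m a) (m b) := by
  have hcases : ∀ x ∈ Icc 25 32, ∀ y ∈ Icc 25 32, ∀ z ∈ Icc 25 32, ∀ t ∈ Icc 25 32,
      x + y + z + t = 121 →
      28 * ∑ a, deficitBound (32 - ![x, y, z, t] a)
        < ∑ a, ∑ b ∈ univ.erase a, crossBound (![x, y, z, t] a) (![x, y, z, t] b) := by
    decide +kernel
  rw [Fin.sum_univ_four] at hsum
  have hrange (a : Fin 4) : m a ∈ Icc 25 32 := by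
    have := hm 0
    have := hm 1
    have := hm 2
    have := hm 3
    refine mem_Icc.2 ⟨?_, hm a⟩
    fin_cases a <;> dsimp <;> omega
  have hvec : m = ![m 0, m 1, m 2, m 3] := by
    ext a
    fin_cases a <;> rfl
  rw [hvec]
  exact hcases _ (hrange 0) _ (hrange 1) _ (hrange 2) _ (hrange 3) hsum

lemma AgreementLE.card_ne_121 (hC : AgreementLE 3 C) : #C ≠ 121 := by
  intro hcard
  obtain ⟨i, hi⟩ := exists_two_mul_card_agreeingPairs_le C
  have hblock (a : Fin 4) : #(slice C i a) ≤ 32 :=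
    (constantOn_slice C i a).card_block_le (hC.slice i a)
  have hinner := hC.card_collisions_le i
  have hcross := hC.card_collisions_add_sum_crossBound_le i
  have hlt := sum_deficitBound_lt_sum_crossBound hblock ((sum_card_slice C i).trans hcard)
  omega

lemma AgreementLE.card_le_120 (hC : AgreementLE 3 C) : #C ≤ 120 := by
  by_contra! h
  obtain ⟨D, hDC, hD⟩ := exists_subset_card_eq (show 121 ≤ #C from h)
  exact (hC.subset hDC).card_ne_121 hD

end Codes

lemma card_le_of_six_le_hammingDist (C : Finset (Fin 9 → Fin 4))
    (hC : ∀ u ∈ C, ∀ v ∈ C, u ≠ v → 6 ≤ hammingDist u v) : #C ≤ 120 := by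
  refine AgreementLE.card_le_120 fun u hu v hv huv => ?_
  have hdist := hC u hu v hv huv
  have hadd := agreement_add_hammingDist u v
  rw [Fintype.card_fin] at hadd
  omega

end QaryCode

/-- `A_4(9,6) ≤ 120` and `A_4(10,6) ≤ 480`. -/
theorem A4_9_6_and_A4_10_6 :
    (∀ C : Finset (Fin 9 → Fin 4),
      (∀ u ∈ C, ∀ v ∈ C, u ≠ v → 6 ≤ hammingDist u v) → C.card ≤ 120)
    ∧ (∀ C : Finset (Fin 10 → Fin 4),
      (∀ u ∈ C, ∀ v ∈ C, u ≠ v → 6 ≤ hammingDist u v) → C.card ≤ 480) :=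
  ⟨QaryCode.card_le_of_six_le_hammingDist,
    fun _ hC => QaryCode.card_le_card_alphabet_mul QaryCode.card_le_of_six_le_hammingDist hC⟩
end

section
/- For all integers r ≥ 3 and n ≥ 1, the maximum of α(C_{d,q}^{⊠n}) over all pairs of positive integers (q,d) with q ≥ 2d and q/d < r equals (1 + rⁿ(r−2))/(r−1). -/
/-- The circular (Lee) distance on `ℤ/qℤ`: `δ(x,y) = min(|x-y|, q-|x-y|)`,
with representatives taken in `{0,…,q-1}`. -/
def circDist (q : ℕ) (x y : ZMod q) : ℕ := min (x - y).val (y - x).val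

/-!
Write `q_k = (1 + r ^ k (r - 2)) / (r - 1)`, so that `q_{k+1} = r q_k - 1`.

*Upper bound.* The words of an independent set whose first letter lies in a fixed arc of `d`
consecutive residues are separated by their other letters. Averaging over the `q` arcs gives
`α_{n+1} ≤ ⌊q α_n / d⌋ < r α_n`, and hence `α_n ≤ q_n` by induction.

*Lower bound.* For `q = q_n` and `d = q_{n-1}`, the words `(x, r x, …, r ^ (n-1) x)` with
`x ∈ ℤ/qℤ` form an independent set. Otherwise some `0 < v < q` has all its multiples `r ^ i v`,
`i < n`, at distance less than `d` from `0`. Since `r (d - 1) < q`, this says that the first `n`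
base-`r` digits of `v / q` are all `0` or `r - 1`, as for points of a Cantor set; hence
`r ^ n v = (r - 1) D q + w` with `0 ≤ w < q`. As `(r - 1) q = 1 + r ^ n (r - 2)`, the sum `D + w` is
a multiple of `r ^ n`; it is also smaller than `r ^ n`, so it vanishes, and `v = 0`.
-/

/-- A set of words is independent in the strong power `C_{d,q}^{⊠ι}` of the circular graph, the
letters of a word being indexed by `ι`. -/
def IsCircIndep (q d : ℕ) {ι : Type*} (S : Set (ι → ZMod q)) : Prop :=
  S.Pairwise fun u v => ∃ i, d ≤ circDist q (u i) (v i)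

/-- The number `q_k = (1 + r ^ k (r - 2)) / (r - 1)`, which is both the extremal modulus and the
extremal cardinality in dimension `k`. Writing it as a geometric sum avoids the division; because of
the truncated subtraction the formula is meaningful only for `2 ≤ r`. -/
def extremalSize (r k : ℕ) : ℕ := 1 + (r - 2) * ∑ i ∈ Finset.range k, r ^ i

/-- The word `(x, r x, r ^ 2 x, …)` of length `n`. These words form the extremal independent set. -/
def geomWord (q r n : ℕ) (x : ZMod q) : Fin n → ZMod q := fun i => (r : ZMod q) ^ (i : ℕ) * x

section ExtremalSize

variable {r : ℕ}

lemma extremalSize_pos (r k : ℕ) : 0 < extremalSize r k := by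
  unfold extremalSize
  omega

instance (r k : ℕ) : NeZero (extremalSize r k) := ⟨(extremalSize_pos r k).ne'⟩

lemma extremalSize_succ_add_one (hr : 2 ≤ r) (k : ℕ) :
    extremalSize r (k + 1) + 1 = r * extremalSize r k := by
  obtain ⟨s, rfl⟩ := Nat.exists_eq_add_of_le' hr
  simp only [extremalSize, geom_sum_succ, Nat.add_sub_cancel]
  ring

lemma sub_one_mul_extremalSize (hr : 2 ≤ r) (k : ℕ) :
    (r - 1) * extremalSize r k = 1 + r ^ k * (r - 2) := by
  obtain ⟨s, rfl⟩ := Nat.exists_eq_add_of_le' hr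
  have geom : (∑ i ∈ Finset.range k, (s + 2) ^ i) * (s + 1) + 1 = (s + 2) ^ k :=
    geom_sum_mul_add (s + 1) k
  simp only [extremalSize, Nat.add_sub_cancel, show s + 2 - 1 = s + 1 from rfl]
  rw [← geom]
  ring

lemma extremalSize_eq_div (hr : 2 ≤ r) (k : ℕ) :
    extremalSize r k = (1 + r ^ k * (r - 2)) / (r - 1) := by
  rw [← sub_one_mul_extremalSize hr, Nat.mul_div_cancel_left _ (by omega)]

end ExtremalSize

section CircDist

variable {q : ℕ}

lemma circDist_self (x : ZMod q) : circDist q x x = 0 := by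
  simp [circDist]

variable [NeZero q]

lemma circDist_eq_min_val_sub (x y : ZMod q) :
    circDist q x y = min (x - y).val (q - (x - y).val) := by
  unfold circDist
  rw [← neg_sub x y, ZMod.neg_val]
  split_ifs with h <;> simp [h]

lemma circDist_lt_of_val_sub_lt {d : ℕ} {x y c : ZMod q} (hx : (x - c).val < d)
    (hy : (y - c).val < d) : circDist q x y < d := by
  rw [circDist, min_lt_iff]
  rcases le_total (y - c).val (x - c).val with h | h
  · left
    have hval := ZMod.val_sub h
    rw [sub_sub_sub_cancel_right] at hval
    omega
  · right
    have hval := ZMod.val_sub h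
    rw [sub_sub_sub_cancel_right] at hval
    omega

lemma card_filter_val_sub_lt {d : ℕ} (hdq : d ≤ q) (a : ZMod q) :
    (Finset.univ.filter fun c : ZMod q => (a - c).val < d).card = d := by
  rw [← Finset.card_range d]
  refine Finset.card_nbij' (fun c => (a - c).val) (fun j => a - j) ?_ ?_ ?_ ?_
  · intro c hc
    simpa using hc
  · intro j hj
    have hjd : j < d := by simpa using hj
    simpa [ZMod.val_natCast_of_lt (hjd.trans_le hdq)] using hjd
  · intro c _
    simp
  · intro j hj
    have hjd : j < d := by simpa using hj
    simp [ZMod.val_natCast_of_lt (hjd.trans_le hdq)]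

end CircDist

section UpperBound

variable {q d n : ℕ}

lemma IsCircIndep.pairwise_tail {T : Set (Fin (n + 1) → ZMod q)} (hT : IsCircIndep q d T)
    (hclose : ∀ u ∈ T, ∀ v ∈ T, circDist q (u 0) (v 0) < d) :
    T.Pairwise fun u v => ∃ i, d ≤ circDist q (Fin.tail u i) (Fin.tail v i) := by
  intro u hu v hv huv
  obtain ⟨i, hi⟩ := hT hu hv huv
  obtain ⟨j, rfl⟩ := Fin.exists_succ_eq.2 fun h0 : i = 0 =>
    (hclose u hu v hv).not_ge (h0 ▸ hi)
  exact ⟨j, hi⟩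

lemma IsCircIndep.injOn_tail {T : Set (Fin (n + 1) → ZMod q)} (hT : IsCircIndep q d T)
    (hclose : ∀ u ∈ T, ∀ v ∈ T, circDist q (u 0) (v 0) < d) :
    Set.InjOn (Fin.tail : (Fin (n + 1) → ZMod q) → Fin n → ZMod q) T := by
  intro u hu v hv htail
  by_contra huv
  obtain ⟨i, hi⟩ := hT.pairwise_tail hclose hu hv huv
  rw [htail, circDist_self] at hi
  exact absurd (hclose u hu v hv) (by omega)

lemma IsCircIndep.card_mul_le [NeZero q] (hdq : d ≤ q) {M : ℕ}
    (hM : ∀ T : Finset (Fin n → ZMod q), IsCircIndep q d (T : Set (Fin n → ZMod q)) → T.card ≤ M)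
    {S : Finset (Fin (n + 1) → ZMod q)} (hS : IsCircIndep q d (S : Set (Fin (n + 1) → ZMod q))) :
    S.card * d ≤ q * M := by
  have card_slice_le (c : ZMod q) : (S.filter fun u => (u 0 - c).val < d).card ≤ M := by
    set T := S.filter fun u => (u 0 - c).val < d
    have hT : IsCircIndep q d (T : Set (Fin (n + 1) → ZMod q)) :=
      hS.mono (Finset.coe_subset.2 (Finset.filter_subset _ _))
    have hclose : ∀ u ∈ T, ∀ v ∈ T, circDist q (u 0) (v 0) < d := fun u hu v hv =>
      circDist_lt_of_val_sub_lt (Finset.mem_filter.1 hu).2 (Finset.mem_filter.1 hv).2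
    rw [← Finset.card_image_of_injOn (hT.injOn_tail hclose)]
    apply hM
    rw [Finset.coe_image]
    exact (hT.pairwise_tail hclose).image
  have hcount := Finset.card_mul_le_card_mul (s := S) (t := Finset.univ)
    (fun u c => (u 0 - c).val < d) (fun u _ => (card_filter_val_sub_lt hdq (u 0)).ge)
    (fun c _ => card_slice_le c)
  rwa [Finset.card_univ, ZMod.card] at hcount

lemma IsCircIndep.card_le_extremalSize {r : ℕ} (hr : 2 ≤ r) (hdq : d ≤ q) (hq : q < r * d)
    {S : Finset (Fin n → ZMod q)}
    (hS : IsCircIndep q d (S : Set (Fin n → ZMod q))) : S.card ≤ extremalSize r n := by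
  have hd : 0 < d := Nat.pos_of_lt_mul_left hq
  have : NeZero q := ⟨by omega⟩
  induction n with
  | zero => exact (Finset.card_le_one_of_subsingleton S).trans (extremalSize_pos r 0)
  | succ n ih =>
    have hlt : S.card * d < r * extremalSize r n * d :=
      calc S.card * d ≤ q * extremalSize r n := hS.card_mul_le hdq fun _ hT => ih hT
        _ < r * d * extremalSize r n := Nat.mul_lt_mul_of_pos_right hq (extremalSize_pos r n)
        _ = r * extremalSize r n * d := by ring
    rw [← extremalSize_succ_add_one hr] at hlt
    exact Nat.lt_succ_iff.1 (Nat.lt_of_mul_lt_mul_right hlt)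

end UpperBound

section LowerBound

variable {r N : ℕ}

-- The assumption `ha` says that the first base-`r` digit of `(a % N) / N` is `0` or `r - 1`.
lemma sub_one_dvd_mul_div {a : ℕ} (ha : r * (a % N) < N ∨ r * (N - a % N) < N)
    (hdvd : r - 1 ∣ a / N) : r - 1 ∣ r * a / N := by
  have hN : 0 < N := by omega
  have hmod : a % N < N := Nat.mod_lt a hN
  have hdiv : r * a / N = r * (a / N) + r * (a % N) / N := by
    rw [← Nat.mul_add_div hN]
    congr 1
    nth_rw 1 [← Nat.div_add_mod a N]
    ring
  have hdigit : r - 1 ∣ r * (a % N) / N := by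
    rcases ha with hlow | hhigh
    · simp [Nat.div_eq_of_lt hlow]
    · rcases r with - | s
      · simp
      · have hquot : (s + 1) * (a % N) / N = s := by
          zify [hmod.le] at hhigh
          apply Nat.div_eq_of_lt_le
          · zify
            linarith
          · gcongr
        simp [hquot]
  exact hdiv ▸ (hdvd.mul_left r).add hdigit

lemma sub_one_dvd_pow_mul_div {n v : ℕ} (hv : v < N)
    (hdigits : ∀ i < n, r * (r ^ i * v % N) < N ∨ r * (N - r ^ i * v % N) < N) :
    r - 1 ∣ r ^ n * v / N := by
  induction n with
  | zero => simp [Nat.div_eq_of_lt hv]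
  | succ n ih =>
    rw [pow_succ', mul_assoc]
    exact sub_one_dvd_mul_div (hdigits n n.lt_succ_self)
      (ih fun i hi => hdigits i (hi.trans n.lt_succ_self))

lemma eq_zero_of_sub_one_dvd_pow_mul_div (hr : 2 ≤ r) {n v : ℕ}
    (hN : (r - 1) * N = 1 + r ^ n * (r - 2)) (hv : v < N) (hdvd : r - 1 ∣ r ^ n * v / N) :
    v = 0 := by
  obtain ⟨s, rfl⟩ := Nat.exists_eq_add_of_le' hr
  simp only [Nat.add_sub_cancel, show s + 2 - 1 = s + 1 from rfl] at hN hdvd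
  have hNpos : 0 < N := by omega
  have hP : 0 < (s + 2) ^ n := by positivity
  generalize (s + 2) ^ n = P at *
  obtain ⟨D, hD⟩ := hdvd
  set w := P * v % N
  have hw : w < N := Nat.mod_lt _ hNpos
  have hexp : P * v = N * ((s + 1) * D) + w := by rw [← hD, Nat.div_add_mod]
  have hDP : (s + 1) * D < P := by
    rw [← hD, Nat.div_lt_iff_lt_mul hNpos]
    exact Nat.mul_lt_mul_of_pos_left hv hP
  have hsum_dvd : P ∣ D + w := by
    rw [← Nat.dvd_add_right (dvd_mul_right P (s * D))]
    refine ⟨v, ?_⟩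
    calc P * (s * D) + (D + w) = (1 + P * s) * D + w := by ring
      _ = P * v := by rw [← hN, hexp]; ring
  have hsum_lt : D + w < P := by nlinarith
  have hsum : D + w = 0 := Nat.eq_zero_of_dvd_of_lt hsum_dvd hsum_lt
  obtain ⟨hD0, hw0⟩ : D = 0 ∧ w = 0 := by omega
  simpa [hD0, hw0, hP.ne'] using hexp

lemma mul_lt_of_lt_of_add_one_eq {d w : ℕ} (hr : 2 ≤ r) (hN : N + 1 = r * d) (hw : w < d) :
    r * w < N := by
  have : r * (w + 1) ≤ r * d := Nat.mul_le_mul_left r hw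
  rw [mul_add_one] at this
  omega

lemma geomWord_injective (q r n : ℕ) : Function.Injective (geomWord q r (n + 1)) := by
  intro x y hxy
  simpa [geomWord] using congrFun hxy 0

lemma circDist_geomWord {q : ℕ} [NeZero q] (r n : ℕ) (x y : ZMod q) (i : Fin n) :
    circDist q (geomWord q r n x i) (geomWord q r n y i) =
      min (r ^ (i : ℕ) * (x - y).val % q) (q - r ^ (i : ℕ) * (x - y).val % q) := by
  have hval : (geomWord q r n x i - geomWord q r n y i).val = r ^ (i : ℕ) * (x - y).val % q := by
    rw [← ZMod.val_natCast]
    simp [geomWord, mul_sub]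
  rw [circDist_eq_min_val_sub, hval]

lemma isCircIndep_range_geomWord (hr : 2 ≤ r) (n : ℕ) :
    IsCircIndep (extremalSize r (n + 1)) (extremalSize r n)
      (Set.range (geomWord (extremalSize r (n + 1)) r (n + 1))) := by
  rintro _ ⟨x, rfl⟩ _ ⟨y, rfl⟩ hne
  by_contra! hclose
  simp only [circDist_geomWord, min_lt_iff] at hclose
  have hmul {w : ℕ} (hw : w < extremalSize r n) : r * w < extremalSize r (n + 1) :=
    mul_lt_of_lt_of_add_one_eq hr (extremalSize_succ_add_one hr n) hw
  have hdvd := sub_one_dvd_pow_mul_div (ZMod.val_lt (x - y))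
    fun i hi => (hclose ⟨i, hi⟩).imp hmul hmul
  have hzero : (x - y).val = 0 := eq_zero_of_sub_one_dvd_pow_mul_div hr
    (sub_one_mul_extremalSize hr (n + 1)) (ZMod.val_lt _) hdvd
  exact hne (congrArg _ (sub_eq_zero.1 ((ZMod.val_eq_zero _).1 hzero)))

end LowerBound

/-- Theorem: for integers `r ≥ 3` and `n ≥ 1`, the maximum of `α(C_{d,q}^{⊠n})`
over all pairs of positive integers `(q,d)` with `q ≥ 2d` and `q/d < r` equals
`(1 + rⁿ(r-2))/(r-1)`.  (A set `S ⊆ (ℤ/qℤ)ⁿ` is independent in `C_{d,q}^{⊠n}` iff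
any two distinct elements differ by at least `d` in circular distance in some
coordinate.) -/
theorem max_alpha_circular_power (r n : ℕ) (hr : 3 ≤ r) (hn : 0 < n) :
    IsGreatest {k : ℕ | ∃ q d : ℕ, 0 < d ∧ 2 * d ≤ q ∧ q < r * d ∧
        ∃ S : Finset (Fin n → ZMod q),
          (∀ u ∈ S, ∀ v ∈ S, u ≠ v → ∃ i : Fin n, d ≤ circDist q (u i) (v i)) ∧
          S.card = k}
      ((1 + r ^ n * (r - 2)) / (r - 1)) := by
  have hr2 : 2 ≤ r := by omega
  rw [← extremalSize_eq_div hr2]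
  constructor
  · obtain ⟨m, rfl⟩ := Nat.exists_eq_add_one.2 hn
    have hpos := extremalSize_pos r m
    have hsucc := extremalSize_succ_add_one hr2 m
    have hmul : 3 * extremalSize r m ≤ r * extremalSize r m := Nat.mul_le_mul_right _ hr
    refine ⟨extremalSize r (m + 1), extremalSize r m, hpos, by omega, by omega,
      Finset.univ.image (geomWord _ r (m + 1)), fun u hu v hv => ?_, ?_⟩
    · exact isCircIndep_range_geomWord hr2 m (by simpa using hu) (by simpa using hv)
    · rw [Finset.card_image_of_injective _ (geomWord_injective _ r m), Finset.card_univ, ZMod.card]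
  · rintro _ ⟨q, d, -, h2d, hq, S, hS, rfl⟩
    exact IsCircIndep.card_le_extremalSize hr2 (by omega) hq fun _ hu _ hv => hS _ hu _ hv
end

section
/- Fix integers r ≥ 3 and n ≥ 1. For all positive integers q, d with q ≥ 2d and q/d < r, one has α(C_{d,q}^{⊠n}) ≤ (1 + rⁿ(r−2))/(r−1); that is, every set S ⊆ (ℤ/qℤ)ⁿ that is independent in C_{d,q}^{⊠n} has cardinality at most (1 + rⁿ(r−2))/(r−1). -/
/-!
An arc of `d` consecutive residues mod `q` is a clique of `C_{d,q}`. Hence the members of an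
independent set `S` whose `i`-th coordinate lies in a given arc remain independent when coordinate
`i` is discarded. Each residue lies in exactly `d` of the `q` arcs, so if `M` bounds the size of
independent sets on the remaining coordinates, double counting gives `d |S| ≤ q M`. As `q < r d`,
this yields `|S| ≤ r M - 1`, and `(1 + rⁿ(r-2))/(r-1)` solves the recurrence `M ↦ r M - 1` with
initial value `1`.
-/

open Finset

section Arc

variable {q : ℕ} [NeZero q] {d : ℕ}

/-- The arc of `d` consecutive residues `t, t + 1, …, t + d - 1` in `ℤ/qℤ`, a clique of the circular
graph `C_{d,q}`; for `d ≥ q` it is all of `ℤ/qℤ`. -/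
def circArc (d : ℕ) (t : ZMod q) : Finset (ZMod q) := {x | (x - t).val < d}

lemma mem_circArc {t x : ZMod q} : x ∈ circArc d t ↔ (x - t).val < d :=
  mem_filter_univ x

lemma circDist_lt_of_mem_circArc {t x y : ZMod q} (hx : x ∈ circArc d t) (hy : y ∈ circArc d t) :
    circDist q x y < d := by
  wlog hyx : (y - t).val ≤ (x - t).val generalizing x y
  · rw [circDist, min_comm]
    exact this hy hx (le_of_not_ge hyx)
  calc circDist q x y ≤ (x - y).val := min_le_left _ _
    _ = (x - t - (y - t)).val := by rw [sub_sub_sub_cancel_right]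
    _ = (x - t).val - (y - t).val := ZMod.val_sub hyx
    _ ≤ (x - t).val := Nat.sub_le _ _
    _ < d := mem_circArc.1 hx

lemma card_filter_mem_circArc (hdq : d ≤ q) (x : ZMod q) : #{t | x ∈ circArc d t} = d := by
  have val_cast {k : ℕ} (hk : k < d) : (k : ZMod q).val = k :=
    ZMod.val_natCast_of_lt (hk.trans_le hdq)
  calc #{t | x ∈ circArc d t} = #(range d) := by
        refine card_nbij' (fun t ↦ (x - t).val) (fun k ↦ x - k) ?_ ?_ ?_ ?_ <;>
          simp +contextual [Set.MapsTo, Set.LeftInvOn, mem_circArc, val_cast]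
    _ = d := card_range d

lemma card_mul_le_of_card_filter_circArc_le {α : Type*} (hdq : d ≤ q) {S : Finset α}
    (f : α → ZMod q) {M : ℕ} (hM : ∀ t, #{a ∈ S | f a ∈ circArc d t} ≤ M) : #S * d ≤ q * M := by
  have hcount := card_mul_le_card_mul (s := S) (t := univ) (fun a t ↦ f a ∈ circArc d t)
    (fun a _ ↦ (card_filter_mem_circArc hdq (f a)).ge) (fun t _ ↦ hM t)
  rwa [card_univ, ZMod.card] at hcount

end Arc

section Independent

variable {ι : Type*} {q d : ι → ℕ}

/-- When all `d i` are positive: `S` projects injectively onto an independent set in the strong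
product of the circular graphs `C_{d i, q i}` over `i ∈ I`. Coordinates outside `I` are kept but
ignored, so that an induction on `I` stays within one ambient type. -/
def CircIndepOn (d : ι → ℕ) (I : Finset ι) (S : Set (∀ i, ZMod (q i))) : Prop :=
  S.Pairwise fun u v ↦ ∃ i ∈ I, d i ≤ circDist (q i) (u i) (v i)

namespace CircIndepOn

variable {S : Finset (∀ i, ZMod (q i))}

lemma card_le_one (hS : CircIndepOn d ∅ (S : Set (∀ i, ZMod (q i)))) : #S ≤ 1 := by
  refine Finset.card_le_one.2 fun u hu v hv ↦ by_contra fun huv ↦ ?_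
  obtain ⟨i, hi, -⟩ := hS hu hv huv
  exact notMem_empty i hi

lemma filter_circArc [DecidableEq ι] {i : ι} [NeZero (q i)] {I : Finset ι}
    (hS : CircIndepOn d (insert i I) (S : Set (∀ i, ZMod (q i)))) (t : ZMod (q i)) :
    CircIndepOn d I (S.filter (fun u ↦ u i ∈ circArc (d i) t) : Set (∀ i, ZMod (q i))) := by
  intro u hu v hv huv
  obtain ⟨huS, hut⟩ := mem_filter.1 hu
  obtain ⟨hvS, hvt⟩ := mem_filter.1 hv
  obtain ⟨j, hj, hdist⟩ := hS huS hvS huv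
  rcases mem_insert.1 hj with rfl | hjI
  · exact absurd (circDist_lt_of_mem_circArc hut hvt) hdist.not_gt
  · exact ⟨j, hjI, hdist⟩

end CircIndepOn

end Independent

section Recurrence

variable {r : ℕ}

lemma one_le_one_add_pow_mul_div (hr : 2 ≤ r) (n : ℕ) : 1 ≤ (1 + r ^ n * (r - 2)) / (r - 1) := by
  rw [Nat.le_div_iff_mul_le (by omega)]
  have : r - 2 ≤ r ^ n * (r - 2) := Nat.le_mul_of_pos_left _ (by positivity)
  omega

lemma le_one_add_pow_succ_mul_div (hr : 2 ≤ r) {n k : ℕ}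
    (hk : k < r * ((1 + r ^ n * (r - 2)) / (r - 1))) :
    k ≤ (1 + r ^ (n + 1) * (r - 2)) / (r - 1) := by
  obtain ⟨s, rfl⟩ := Nat.exists_eq_add_of_le' hr
  simp only [Nat.add_sub_cancel, show s + 2 - 1 = s + 1 from rfl] at hk ⊢
  set M := (1 + (s + 2) ^ n * s) / (s + 1)
  rw [Nat.le_div_iff_mul_le s.succ_pos]
  refine Nat.le_of_add_le_add_right (b := s + 1) ?_
  calc k * (s + 1) + (s + 1) = (k + 1) * (s + 1) := by ring
    _ ≤ (s + 2) * M * (s + 1) := Nat.mul_le_mul_right _ hk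
    _ = (s + 2) * (M * (s + 1)) := mul_assoc _ _ _
    _ ≤ (s + 2) * (1 + (s + 2) ^ n * s) := Nat.mul_le_mul_left _ (Nat.div_mul_le_self _ _)
    _ = 1 + (s + 2) ^ (n + 1) * s + (s + 1) := by ring

end Recurrence

theorem alpha_circular_power_upper_bound_general {ι : Type*} {q d : ι → ℕ} {r : ℕ} (hr : 2 ≤ r)
    {I : Finset ι} (hdq : ∀ i ∈ I, d i ≤ q i) (hqd : ∀ i ∈ I, q i < r * d i)
    {S : Finset (∀ i, ZMod (q i))} (hS : CircIndepOn d I (S : Set (∀ i, ZMod (q i)))) :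
    #S ≤ (1 + r ^ #I * (r - 2)) / (r - 1) := by
  classical
  induction I using Finset.induction generalizing S with
  | empty => exact hS.card_le_one.trans (one_le_one_add_pow_mul_div hr _)
  | insert i I hi ih =>
    rw [forall_mem_insert] at hdq hqd
    have hd : 0 < d i := Nat.pos_of_mul_pos_left (Nat.zero_lt_of_lt hqd.1)
    have : NeZero (q i) := ⟨(hd.trans_le hdq.1).ne'⟩
    rw [card_insert_of_notMem hi]
    apply le_one_add_pow_succ_mul_div hr
    set M := (1 + r ^ #I * (r - 2)) / (r - 1)
    have hM : 0 < M := one_le_one_add_pow_mul_div hr _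
    refine Nat.lt_of_mul_lt_mul_right (a := d i) ?_
    calc #S * d i ≤ q i * M := card_mul_le_of_card_filter_circArc_le hdq.1 (fun u ↦ u i)
          fun t ↦ ih hdq.2 hqd.2 (hS.filter_circArc t)
      _ < r * d i * M := Nat.mul_lt_mul_of_pos_right hqd.1 hM
      _ = r * M * d i := mul_right_comm _ _ _

/-- Upper bound: for integers `r ≥ 3`, `n ≥ 1` and positive integers `q, d` with
`q ≥ 2d` and `q/d < r`, every independent set in `C_{d,q}^{⊠n}` has cardinality
at most `(1 + rⁿ(r-2))/(r-1)`. -/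
theorem alpha_circular_power_upper_bound (r n : ℕ) (hr : 3 ≤ r) (hn : 0 < n)
    (q d : ℕ) (hd : 0 < d) (h2d : 2 * d ≤ q) (hqd : q < r * d)
    (S : Finset (Fin n → ZMod q))
    (hS : ∀ u ∈ S, ∀ v ∈ S, u ≠ v → ∃ i : Fin n, d ≤ circDist q (u i) (v i)) :
    S.card ≤ (1 + r ^ n * (r - 2)) / (r - 1) := by
  have hindep : CircIndepOn (fun _ ↦ d) univ (S : Set (Fin n → ZMod q)) := fun u hu v hv huv ↦
    (hS u hu v hv huv).imp fun i hi ↦ ⟨mem_univ i, hi⟩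
  simpa using alpha_circular_power_upper_bound_general (by omega) (fun _ _ ↦ by omega)
    (fun _ _ ↦ hqd) hindep
end
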